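/- Let n = 85 and let x, y ∈ S_85 be the permutations given in the context, with z = (x·y)⁻¹. Then (x, y, z) is a nice triple; the cycle types of x, y, z are 15^5·5^2, 2^35 and 4^16·2^7 respectively; and the subgroup ⟨x, y⟩ of S_85 has cardinality 1958400 (the order of PSp(4,4):2). -/

import Mathlib

/-- `permInd s` = (sum of the cycle type of `s`) − (number of entries of the cycle type of `s`),
i.e. `n` minus the number of cycles of `s` when fixed points are counted as cycles. -/
def permInd {n : ℕ} (s : Equiv.Perm (Fin n)) : ℕ :=
  s.cycleType.sum - Multiset.card s.cycleType

/-- A `MulAction` is preprimitive if it is pretransitive and every block is trivial. -/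
def IsPreprimitive (G : Type*) (X : Type*) [Group G] [MulAction G X] : Prop :=
  MulAction.IsPretransitive G X ∧
    ∀ B : Set X, MulAction.IsBlock G B → MulAction.IsTrivialBlock B

/-- A triple `(x, y, z)` of permutations in `S_n` is *nice*:
(i) `x * y * z = 1`; (ii) `G = ⟨x, y⟩` is neither the alternating nor the symmetric group;
(iii) `G` acts primitively on `Fin n` and is almost simple; (iv) the triple has genus 0;
(v) the triple is rigid in `G`; (vi) `x`, `y`, `z` lie in rational conjugacy classes of `G`. -/
def IsNice {n : ℕ} (x y z : Equiv.Perm (Fin n)) : Prop :=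
  x * y * z = 1 ∧
  (Subgroup.closure {x, y} ≠ alternatingGroup (Fin n) ∧
    Subgroup.closure {x, y} ≠ ⊤) ∧
  IsPreprimitive (Subgroup.closure {x, y}) (Fin n) ∧
  (∃ S : Subgroup (Subgroup.closure {x, y}), S.Normal ∧ IsSimpleGroup S ∧
    (∃ a b : S, a * b ≠ b * a) ∧
    Subgroup.centralizer (S : Set (Subgroup.closure {x, y})) = ⊥) ∧
  permInd x + permInd y + permInd z = 2 * (n - 1) ∧
  (∀ x' y' z' : Equiv.Perm (Fin n),
    x' * y' * z' = 1 →
    Subgroup.closure {x', y'} = Subgroup.closure {x, y} →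
    (∃ g ∈ Subgroup.closure {x, y}, g * x * g⁻¹ = x') →
    (∃ g ∈ Subgroup.closure {x, y}, g * y * g⁻¹ = y') →
    (∃ g ∈ Subgroup.closure {x, y}, g * z * g⁻¹ = z') →
    ∃ g ∈ Subgroup.closure {x, y},
      g * x * g⁻¹ = x' ∧ g * y * g⁻¹ = y' ∧ g * z * g⁻¹ = z') ∧
  ∀ g ∈ ({x, y, z} : Set (Equiv.Perm (Fin n))), ∀ k : ℤ,
    Int.gcd k (orderOf g) = 1 →
    ∃ h ∈ Subgroup.closure {x, y}, h * g * h⁻¹ = g ^ k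

/-- The permutation given by a list of (disjoint) cycles, each written as a list of points. -/
def permOfCycles {n : ℕ} (cs : List (List (Fin n))) : Equiv.Perm (Fin n) :=
  (cs.map List.formPerm).prod

def x : Equiv.Perm (Fin 85) := permOfCycles [
  [1, 85, 49, 26, 15, 39, 65, 24, 37, 4, 23, 3, 28, 19, 76],
  [2, 82, 64, 74, 52, 58, 20, 70, 43, 7, 68, 12, 53, 40, 16],
  [5, 81, 51, 67, 54, 44, 41, 77, 30, 21, 71, 63, 33, 66, 18],
  [6, 42, 46, 50, 60, 22, 73, 80, 47, 45, 14, 31, 13, 55, 79],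
  [8, 62, 56, 36, 72, 69, 35, 25, 10, 84, 48, 34, 59, 27, 11],
  [9, 57, 83, 78, 17],
  [29, 38, 61, 75, 32]]

def y : Equiv.Perm (Fin 85) := permOfCycles [
  [3, 70],
  [5, 29],
  [6, 17],
  [7, 68],
  [8, 27],
  [9, 74],
  [14, 23],
  [15, 39],
  [16, 57],
  [18, 33],
  [19, 52],
  [20, 58],
  [22, 35],
  [24, 31],
  [25, 60],
  [26, 65],
  [30, 71],
  [32, 81],
  [34, 56],
  [36, 51],
  [38, 53],
  [40, 63],
  [41, 78],
  [42, 84],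
  [43, 61],
  [44, 48],
  [45, 75],
  [46, 50],
  [47, 72],
  [49, 55],
  [54, 67],
  [64, 82],
  [73, 80],
  [76, 79],
  [77, 83]]

/-!
The 85 points are the points of `PG(3, 4)`, and `x`, `y` preserve the orthogonality relation `perp`
of an alternating form. Colour refinement with respect to `perp` makes a short sequence of points
into a base of the automorphism group of `perp`; matching each colour class along the base with an
orbit of words in `x` and `y` gives the order of `G = ⟨x, y⟩`.

The stabiliser of a point has orbits of length 1, 20 and 64, so a block has 1, 21, 65 or 85 points;
since 21 and 65 do not divide 85, `G` is primitive. Its subgroup `S = ⟨x, yxy⟩` of index 2 is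
primitive too; it is perfect because its two generators have odd order and are conjugate to their
inverses, and modulo the normal closure of the elation `x (yxy) = (xy)²` it is cyclic. Iwasawa's
criterion for the abelian groups of elations with a given centre shows that `S` is simple.

For rigidity, let `s` be a conjugate of `y` such that `xs` is conjugate to `xy`. Then `(xs)²` is an
elation with some centre `a`, and `x⁻¹ (xs)² = sxs` is conjugate to `x`. If `a` lay on a 5-cycle of
`x`, this cycle would be invariant under `⟨x, s⟩`. Hence, after conjugating by a power of `x`, the
point `a` is one of five, and of the 15 nontrivial elations with these centres only `t = (xy)²`
makes `x⁻¹ t` conjugate to `x`. So `(xs)² = (xy)²`, and `ys` centralises `x` and fixes `a`, whence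
`s = y`.
-/

namespace NiceTriple

open Equiv Pointwise

section Cycles

variable {n : ℕ}

theorem cycleType_permOfCycles {cs : List (List (Fin n))} (hlen : ∀ c ∈ cs, 2 ≤ c.length)
    (hnodup : cs.flatten.Nodup) : (permOfCycles cs).cycleType = cs.map List.length := by
  obtain ⟨hcycle, hdisj⟩ := List.nodup_flatten.mp hnodup
  rw [permOfCycles, Perm.cycleType_eq (cs.map List.formPerm) rfl, List.map_map]
  · refine congrArg _ (List.map_congr_left fun c hc => ?_)
    have hne : ∀ a, c ≠ [a] := by rintro a rfl; simpa using hlen _ hc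
    rw [Function.comp_apply, Function.comp_apply,
      List.support_formPerm_of_nodup c (hcycle c hc) hne,
      List.toFinset_card_of_nodup (hcycle c hc)]
  · simp only [List.mem_map, forall_exists_index, and_imp, forall_apply_eq_imp_iff₂]
    exact fun c hc => List.isCycle_formPerm (hcycle c hc) (hlen c hc)
  · refine List.pairwise_map.mpr (hdisj.imp_of_mem fun {c d} hc hd hcd => ?_)
    exact (List.formPerm_disjoint_iff (hcycle c hc) (hcycle d hd) (hlen c hc) (hlen d hd)).mpr hcd

theorem permInd_eq_of_cycleType_eq {s : Perm (Fin n)} {m : Multiset ℕ} (h : s.cycleType = m) :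
    permInd s = m.sum - Multiset.card m := by
  rw [permInd, h]

end Cycles

section RelationAutomorphisms

variable {α κ : Type*}

/-- The automorphism group of an edge colouring `r` of the complete digraph on `α`. -/
def relAut (r : α → α → κ) : Subgroup (Perm α) where
  carrier := {g | ∀ p q, r (g p) (g q) = r p q}
  one_mem' _ _ := rfl
  mul_mem' hg hh p q := (hg _ _).trans (hh p q)
  inv_mem' {g} hg p q := by simpa using (hg (g⁻¹ p) (g⁻¹ q)).symm

/-- `p` is the only point outside `F` joined to the points of `F` by its sequence of colours. -/
def IsDeterminedBy (r : α → α → κ) (F : List α) (p : α) : Prop :=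
  ∀ q, q ∈ F ∨ q = p ∨ ∃ f ∈ F, r f q ≠ r f p

instance [Fintype α] [DecidableEq α] [DecidableEq κ] (r : α → α → κ) (F : List α) :
    DecidablePred (IsDeterminedBy r F) :=
  fun p => inferInstanceAs (Decidable (∀ q, q ∈ F ∨ q = p ∨ ∃ f ∈ F, r f q ≠ r f p))

/-- The points of `F` together with the points determined by `F`; iterating `hull` gives colour
refinement with the points of `F` individualised. -/
def hull {n : ℕ} [DecidableEq κ] (r : Fin n → Fin n → κ) (F : List (Fin n)) : List (Fin n) :=
  (List.finRange n).filter fun p => p ∈ F ∨ IsDeterminedBy r F p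

/-- The subgroup of `H` fixing every point of `F`. -/
def fixer (H : Subgroup (Perm α)) (F : List α) : Subgroup (Perm α) :=
  H ⊓ fixingSubgroup (Perm α) {p | p ∈ F}

theorem mem_fixer {H : Subgroup (Perm α)} {F : List α} {g : Perm α} :
    g ∈ fixer H F ↔ g ∈ H ∧ ∀ p ∈ F, g p = p := by
  simp [fixer, mem_fixingSubgroup_iff]

/-- The points outside `F` that the colours seen from `F` do not distinguish from `b`. -/
def colourClass [Fintype α] [DecidableEq α] [DecidableEq κ] (r : α → α → κ) (F : List α) (b : α) :
    Finset α :=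
  {q | q ∉ F ∧ ∀ f ∈ F, r f q = r f b}

theorem apply_eq_self_of_isDeterminedBy {r : α → α → κ} {F : List α} {p : α} {g : Perm α}
    (hg : g ∈ fixer (relAut r) F) (hp : IsDeterminedBy r F p) : g p = p := by
  obtain ⟨hgr, hgF⟩ := mem_fixer.mp hg
  rcases hp (g p) with hmem | heq | ⟨f, hf, hne⟩
  · exact g.injective (hgF _ hmem)
  · exact heq
  · exact absurd (by simpa only [hgF f hf] using hgr f p) hne

theorem mem_fixer_iterate_hull {n : ℕ} [DecidableEq κ] {r : Fin n → Fin n → κ}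
    {F : List (Fin n)} {g : Perm (Fin n)} (hg : g ∈ fixer (relAut r) F) (k : ℕ) :
    g ∈ fixer (relAut r) ((hull r)^[k] F) := by
  induction k generalizing F with
  | zero => exact hg
  | succ _ ih =>
    refine ih (mem_fixer.mpr ⟨(mem_fixer.mp hg).1, fun p hp => ?_⟩)
    rcases of_decide_eq_true (List.mem_filter.mp hp).2 with hpF | hpF
    · exact (mem_fixer.mp hg).2 p hpF
    · exact apply_eq_self_of_isDeterminedBy hg hpF

theorem eq_one_of_iterate_hull_eq_finRange {n k : ℕ} [DecidableEq κ] {r : Fin n → Fin n → κ}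
    {F : List (Fin n)} (hF : (hull r)^[k] F = List.finRange n) {g : Perm (Fin n)}
    (hg : g ∈ fixer (relAut r) F) : g = 1 :=
  Perm.ext fun p => (mem_fixer.mp (mem_fixer_iterate_hull hg k)).2 p (hF ▸ List.mem_finRange p)

theorem apply_mem_colourClass [Fintype α] [DecidableEq α] [DecidableEq κ] {r : α → α → κ}
    {F : List α} {b : α} (hb : b ∉ F) {g : Perm α} (hg : g ∈ fixer (relAut r) F) :
    g b ∈ colourClass r F b := by
  obtain ⟨hgr, hgF⟩ := mem_fixer.mp hg
  refine Finset.mem_filter.mpr ⟨Finset.mem_univ _, fun hmem => hb ?_, fun f hf => ?_⟩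
  · rwa [g.injective (hgF _ hmem)] at hmem
  · simpa only [hgF f hf] using hgr f b

theorem card_fixer_eq_card_colourClass_mul [Fintype α] [DecidableEq α] [DecidableEq κ]
    {r : α → α → κ} {H : Subgroup (Perm α)} (hH : H ≤ relAut r) {F : List α} {b : α} (hb : b ∉ F)
    (hreach : ∀ q ∈ colourClass r F b, ∃ g ∈ fixer H F, g b = q) :
    Nat.card (fixer H F) = (colourClass r F b).card * Nat.card (fixer H (b :: F)) := by
  have horbit : MulAction.orbit (fixer H F) b = colourClass r F b := by
    ext q
    constructor
    · rintro ⟨g, rfl⟩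
      have hg := mem_fixer.mp g.2
      exact apply_mem_colourClass hb (mem_fixer.mpr ⟨hH hg.1, hg.2⟩)
    · intro hq
      obtain ⟨g, hg, rfl⟩ := hreach q hq
      exact ⟨⟨g, hg⟩, rfl⟩
  have hle : fixer H (b :: F) ≤ fixer H F := fun g hg => by
    simp only [mem_fixer, List.forall_mem_cons] at hg ⊢
    exact ⟨hg.1, hg.2.2⟩
  have hstab : (fixer H (b :: F)).subgroupOf (fixer H F) =
      MulAction.stabilizer (fixer H F) b := by
    ext ⟨g, hg⟩
    simp only [Subgroup.mem_subgroupOf, MulAction.mem_stabilizer_iff, Subgroup.mk_smul,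
      Perm.smul_def, mem_fixer, List.forall_mem_cons] at hg ⊢
    exact ⟨fun h => h.2.1, fun h => ⟨hg.1, h, hg.2⟩⟩
  rw [← Subgroup.index_mul_card (MulAction.stabilizer (fixer H F) b), MulAction.index_stabilizer,
    horbit, Set.ncard_coe_finset, ← hstab,
    Nat.card_congr (Subgroup.subgroupOfEquivOfLe hle).toEquiv]

end RelationAutomorphisms

section Actions

variable {G α : Type*} [Group G] [MulAction G α]

theorem disjoint_or_subset_of_isBlock {o b : α} {B D : Set α} (hB : MulAction.IsBlock G B)
    (hoB : o ∈ B) (hD : ∀ p ∈ D, ∃ g : G, g • o = o ∧ g • b = p) : Disjoint D B ∨ D ⊆ B := by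
  refine or_iff_not_imp_left.mpr fun hmeet q hq => ?_
  obtain ⟨p, hp, hpB⟩ := Set.not_disjoint_iff.mp hmeet
  obtain ⟨g, hgo, rfl⟩ := hD p hp
  obtain ⟨h, hho, rfl⟩ := hD q hq
  have hgB : g • B = B := hB.smul_eq_of_mem hoB (by rwa [hgo])
  have hhB : h • B = B := hB.smul_eq_of_mem hoB (by rwa [hho])
  rw [← hhB, Set.smul_mem_smul_set_iff]
  rwa [← hgB, Set.smul_mem_smul_set_iff] at hpB

theorem isPreprimitive_of_rank_three [Finite α] [MulAction.IsPretransitive G α] {o b c : α}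
    {Δ : Set α}
    (hb : ∀ p ∈ Δ, ∃ g : G, g • o = o ∧ g • b = p)
    (hc : ∀ p ∈ (insert o Δ)ᶜ, ∃ g : G, g • o = o ∧ g • c = p)
    (hΔ : ¬ (insert o Δ).ncard ∣ Nat.card α) (hΔc : ¬ Δᶜ.ncard ∣ Nat.card α) :
    MulAction.IsPreprimitive G α := by
  refine MulAction.IsPreprimitive.of_isTrivialBlock_base o fun {B} hoB hB => ?_
  have hdvd := hB.ncard_dvd_card ⟨o, hoB⟩
  rcases disjoint_or_subset_of_isBlock hB hoB hb with hΔB | hΔB <;>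
    rcases disjoint_or_subset_of_isBlock hB hoB hc with hcB | hcB
  · refine .inl (Set.subsingleton_singleton (a := o) |>.anti fun p hp => ?_)
    have hpΔ := Set.disjoint_compl_left_iff_subset.mp hcB hp
    exact hpΔ.resolve_right fun h => Set.disjoint_left.mp hΔB h hp
  · have hBeq : B = Δᶜ := by
      refine (Set.subset_compl_iff_disjoint_left.mpr hΔB).antisymm fun p hp => ?_
      obtain rfl | hpo := eq_or_ne p o
      exacts [hoB, hcB fun h => h.elim hpo hp]
    exact absurd (hBeq ▸ hdvd) hΔc
  · have hBeq : B = insert o Δ :=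
      (Set.disjoint_compl_left_iff_subset.mp hcB).antisymm (Set.insert_subset hoB hΔB)
    exact absurd (hBeq ▸ hdvd) hΔ
  · refine .inr (Set.eq_univ_of_forall fun p => ?_)
    by_cases hp : p ∈ insert o Δ
    exacts [Set.insert_subset hoB hΔB hp, hcB hp]

theorem isPreprimitive_of_mulAction [hG : MulAction.IsPreprimitive G α] : IsPreprimitive G α :=
  ⟨hG.toIsPretransitive, fun _ => hG.isTrivialBlock_of_isBlock⟩

theorem centralizer_eq_bot_of_isPretransitive [FaithfulSMul G α] {S : Subgroup G}
    [MulAction.IsPretransitive S α] {o : α}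
    (hfix : ∀ p : α, (∀ s ∈ S, s • o = o → s • p = p) → p = o) :
    Subgroup.centralizer (S : Set G) = ⊥ := by
  refine (Subgroup.eq_bot_iff_forall _).mpr fun c hc => ?_
  have hcomm (s : G) (hs : s ∈ S) (p : α) : s • c • p = c • s • p := by
    simp only [smul_smul, Subgroup.mem_centralizer_iff.mp hc s hs]
  have hco : c • o = o := hfix _ fun s hs hso => by rw [hcomm s hs, hso]
  refine FaithfulSMul.eq_of_smul_eq_smul (α := α) fun p => ?_
  obtain ⟨s, rfl⟩ := MulAction.exists_smul_eq S o p
  rw [Subgroup.smul_def, ← hcomm s s.2, hco, one_smul]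

end Actions

section Groups

variable {G : Type*} [Group G]

theorem commutator_closure_eq_top {A : Set G} (hodd : ∀ a ∈ A, Odd (orderOf a))
    (hinv : ∀ a ∈ A, ∃ h ∈ Subgroup.closure A, h * a * h⁻¹ = a⁻¹) :
    commutator (Subgroup.closure A) = ⊤ := by
  rw [← Abelianization.ker_of, eq_top_iff, ← Subgroup.closure_closure_coe_preimage,
    Subgroup.closure_le]
  intro a ha
  obtain ⟨h, hh, hconj⟩ := hinv a ha
  set b := Abelianization.of a
  have hb_inv : b = b⁻¹ := by
    have hconj' : (⟨h, hh⟩ * a * ⟨h, hh⟩⁻¹ : Subgroup.closure A) = a⁻¹ := Subtype.ext hconj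
    simpa [b] using congrArg Abelianization.of hconj'
  have hb_two : b ^ 2 = 1 := by rw [sq, ← eq_inv_iff_mul_eq_one, ← hb_inv]
  have hb_odd : Odd (orderOf b) :=
    (Subgroup.orderOf_coe a ▸ hodd a ha).of_dvd_nat (orderOf_map_dvd _ a)
  exact orderOf_eq_one_iff.mp (Nat.eq_one_of_dvd_coprimes hb_odd.coprime_two_right dvd_rfl
    (orderOf_dvd_of_pow_eq_one hb_two))

theorem eq_top_of_mul_mem_of_closure_pair {a b : G} (hab : Subgroup.closure {a, b} = ⊤)
    (hperfect : commutator G = ⊤) {N : Subgroup G} [N.Normal] (hN : a * b ∈ N) : N = ⊤ := by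
  refine top_le_iff.mp (hperfect.ge.trans ?_)
  refine Subgroup.Normal.commutator_le_of_self_sup_commutative_eq_top (H := Subgroup.zpowers a)
    ?_ inferInstance
  have ha : a ∈ N ⊔ Subgroup.zpowers a := Subgroup.mem_sup_right (Subgroup.mem_zpowers a)
  have hb : b ∈ N ⊔ Subgroup.zpowers a := by
    simpa using mul_mem (inv_mem ha) (Subgroup.mem_sup_left hN : a * b ∈ N ⊔ _)
  rw [eq_top_iff, ← hab, Subgroup.closure_le]
  rintro _ (rfl | rfl)
  exacts [ha, hb]

/-- The exponents `k` such that `g ^ k` is conjugate to `g` under `H`. -/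
def conjExponents (H : Subgroup G) (g : G) : Submonoid ℤ where
  carrier := {k | ∃ h ∈ H, h * g * h⁻¹ = g ^ k}
  one_mem' := ⟨1, one_mem H, by simp⟩
  mul_mem' := by
    rintro k l ⟨h, hh, hk⟩ ⟨i, hi, hl⟩
    refine ⟨i * h, mul_mem hi hh, ?_⟩
    calc i * h * g * (i * h)⁻¹ = i * (h * g * h⁻¹) * i⁻¹ := by group
      _ = (i * g * i⁻¹) ^ k := by rw [hk, conj_zpow]
      _ = g ^ (k * l) := by rw [hl, ← zpow_mul, mul_comm]

theorem mem_conjExponents_congr {H : Subgroup G} {g : G} {k l : ℤ} (hkl : k ≡ l [ZMOD orderOf g]) :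
    k ∈ conjExponents H g ↔ l ∈ conjExponents H g := by
  change (∃ h ∈ H, _ = g ^ k) ↔ ∃ h ∈ H, _ = g ^ l
  rw [zpow_eq_zpow_iff_modEq.mpr hkl]

theorem mem_conjExponents_of_forall_lt [Finite G] {H : Subgroup G} {g : G}
    (hH : ∀ r < orderOf g, r.Coprime (orderOf g) → (r : ℤ) ∈ conjExponents H g) {k : ℤ}
    (hk : Int.gcd k (orderOf g) = 1) : k ∈ conjExponents H g := by
  have hpos : (0 : ℤ) < orderOf g := mod_cast orderOf_pos g
  obtain ⟨r, hr⟩ := Int.eq_ofNat_of_zero_le (Int.emod_nonneg k hpos.ne')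
  have hgcd : Int.gcd (r : ℤ) (orderOf g) = 1 := by rw [← hr, Int.gcd_emod, hk]
  refine (mem_conjExponents_congr (Int.mod_modEq k (orderOf g)).symm).mpr ?_
  rw [hr]
  exact hH r (by have := Int.emod_lt_of_pos k hpos; omega) (by simpa using hgcd)

theorem exists_conj_triple_of_exists_conj_pair {H : Subgroup G} {a b : G}
    (hrigid : ∀ t, Subgroup.closure {a, t} = H → (∃ g ∈ H, g * b * g⁻¹ = t) →
      (∃ g ∈ H, g * (a * b) * g⁻¹ = a * t) → ∃ g ∈ H, g * a * g⁻¹ = a ∧ g * b * g⁻¹ = t)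
    {a' b' c' : G} (hprod : a' * b' * c' = 1) (hgen : Subgroup.closure {a', b'} = H)
    (ha : ∃ g ∈ H, g * a * g⁻¹ = a') (hb : ∃ g ∈ H, g * b * g⁻¹ = b')
    (hc : ∃ g ∈ H, g * (a * b)⁻¹ * g⁻¹ = c') :
    ∃ g ∈ H, g * a * g⁻¹ = a' ∧ g * b * g⁻¹ = b' ∧ g * (a * b)⁻¹ * g⁻¹ = c' := by
  obtain ⟨h, hh, rfl⟩ := ha
  obtain ⟨i, hi, rfl⟩ := hb
  obtain ⟨j, hj, rfl⟩ := hc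
  have hgen' : Subgroup.closure {a, h⁻¹ * (i * b * i⁻¹) * h} = H := by
    rw [← Subgroup.conj_smul_eq_self_of_mem (inv_mem hh), ← hgen, Subgroup.smul_closure,
      Set.smul_set_insert, Set.smul_set_singleton]
    simp [MulAut.smul_def, mul_assoc]
  have hprod' : h * a * h⁻¹ * (i * b * i⁻¹) = j * (a * b) * j⁻¹ := by
    rw [eq_inv_of_mul_eq_one_left hprod]
    group
  obtain ⟨g, hg, hga, hgb⟩ := hrigid _ hgen' ⟨h⁻¹ * i, mul_mem (inv_mem hh) hi, by group⟩
    ⟨h⁻¹ * j, mul_mem (inv_mem hh) hj, by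
      calc h⁻¹ * j * (a * b) * (h⁻¹ * j)⁻¹ = h⁻¹ * (j * (a * b) * j⁻¹) * h := by group
        _ = a * (h⁻¹ * (i * b * i⁻¹) * h) := by rw [← hprod']; group⟩
  have hga' : h * g * a * (h * g)⁻¹ = h * a * h⁻¹ := by
    calc h * g * a * (h * g)⁻¹ = h * (g * a * g⁻¹) * h⁻¹ := by group
      _ = h * a * h⁻¹ := by rw [hga]
  have hgb' : h * g * b * (h * g)⁻¹ = i * b * i⁻¹ := by
    calc h * g * b * (h * g)⁻¹ = h * (g * b * g⁻¹) * h⁻¹ := by group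
      _ = i * b * i⁻¹ := by rw [hgb]; group
  refine ⟨h * g, mul_mem hh hg, hga', hgb', ?_⟩
  rw [eq_inv_of_mul_eq_one_right hprod, ← hga', ← hgb']
  group

theorem closure_pair_le_normalizer {a t : G} (ht : t * t = 1) :
    Subgroup.closure {a, t} ≤ Subgroup.normalizer (Subgroup.closure {a, t * a * t}) := by
  set S := Subgroup.closure {a, t * a * t}
  have ht_inv : t⁻¹ = t := inv_eq_of_mul_eq_one_left ht
  have hconj : S ≤ S.comap (MulAut.conj t).toMonoidHom := by
    refine (Subgroup.closure_le _).mpr ?_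
    rintro _ (rfl | rfl)
    · exact Subgroup.subset_closure (by simp [ht_inv])
    · refine Subgroup.subset_closure (.inl ?_)
      calc t * (t * a * t) * t⁻¹ = t * t * a := by group
        _ = a := by rw [ht, one_mul]
  have hconj_conj (s : G) : t * (t * s * t⁻¹) * t⁻¹ = s := by
    calc t * (t * s * t⁻¹) * t⁻¹ = t * t * s * (t * t)⁻¹ := by group
      _ = s := by simp [ht]
  refine (Subgroup.closure_le _).mpr (Set.insert_subset ?_ (Set.singleton_subset_iff.mpr ?_))
  · exact Subgroup.le_normalizer (Subgroup.subset_closure (by simp))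
  · exact Subgroup.mem_normalizer_iff.mpr fun s =>
      ⟨@hconj s, fun hs => hconj_conj s ▸ hconj hs⟩

end Groups

section Elations

variable {α : Type*} {r : α → α → Bool}

theorem smul_setOf_rel {g : Perm α} (hg : g ∈ relAut r) (o : α) :
    g • {p | r o p} = {p | r (g o) p} := by
  ext p
  have hgp := hg o (g⁻¹ p)
  rw [← Perm.mul_apply, mul_inv_cancel, Perm.one_apply] at hgp
  rw [Set.mem_smul_set_iff_inv_smul_mem, Set.mem_ofPred_eq, Set.mem_ofPred_eq, hgp, Perm.smul_def]

theorem fixingSubgroup_rel_smul {S : Subgroup (Perm α)} (hS : S ≤ relAut r) (g : S) (o : α) :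
    fixingSubgroup S {p | r (g • o) p} = MulAut.conj g • fixingSubgroup S {p | r o p} := by
  have hset : {p | r (g • o) p} = g • {p | r o p} := (smul_setOf_rel (hS g.2) o).symm
  rw [hset, SubMulAction.fixingSubgroup_smul_eq_fixingSubgroup_map_conj]
  rfl

theorem normal_iSup_of_smul_eq_conj {G : Type*} [Group G] [MulAction G α] {T : α → Subgroup G}
    (hT : ∀ (g : G) (p : α), T (g • p) = MulAut.conj g • T p) : (iSup T).Normal := by
  refine Subgroup.normal_iff_map_conj_eq.mpr fun g => ?_
  calc (iSup T).map (MulAut.conj g).toMonoidHom = ⨆ p, T (g • p) := by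
        simp only [Subgroup.map_iSup, hT]
        rfl
    _ = iSup T := (MulAction.toPerm g).iSup_comp

theorem isSimpleGroup_closure_pair {a b : Perm α} (ha : a ≠ 1)
    (hr : Subgroup.closure {a, b} ≤ relAut r)
    [MulAction.IsPreprimitive (Subgroup.closure {a, b}) α]
    (hperfect : commutator (Subgroup.closure {a, b}) = ⊤)
    (hsq : ∀ g ∈ Subgroup.closure {a, b}, ∀ o, (∀ p, r o p → g p = p) → g ^ 2 = 1)
    {o : α} (hab : ∀ p, r o p → (a * b) p = p) :
    IsSimpleGroup (Subgroup.closure {a, b}) := by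
  set S := Subgroup.closure {a, b}
  let A : S := ⟨a, Subgroup.subset_closure (by simp)⟩
  let B : S := ⟨b, Subgroup.subset_closure (by simp)⟩
  let T (p : α) : Subgroup S := fixingSubgroup S {q | r p q}
  have hgen : Subgroup.closure {A, B} = ⊤ := by
    rw [← Subgroup.closure_closure_coe_preimage]
    congr 1
    ext s
    simp [A, B, Subtype.ext_iff]
  have hconj (g : S) (p : α) : T (g • p) = MulAut.conj g • T p := fixingSubgroup_rel_smul hr g p
  have : (iSup T).Normal := normal_iSup_of_smul_eq_conj hconj
  have hmem : A * B ∈ iSup T := Subgroup.mem_iSup_of_mem o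
    ((mem_fixingSubgroup_iff S).mpr hab)
  have : Nontrivial S := ⟨A, 1, fun h => ha (congrArg Subtype.val h)⟩
  refine MulAction.IwasawaStructure.isSimpleGroup (α := α) hperfect
    ⟨T, fun p => ?_, hconj, eq_top_of_mul_mem_of_closure_pair hgen hperfect hmem⟩ inferInstance
  refine ⟨⟨fun g h => Commute.of_orderOf_dvd_two (fun k : T p => ?_) g h⟩⟩
  refine orderOf_dvd_of_pow_eq_one (Subtype.ext (Subtype.ext ?_))
  exact hsq k k.1.2 p ((mem_fixingSubgroup_iff S).mp k.2)

end Elations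

section Involutions

variable {α : Type*} [Finite α] {f s : Perm α} {a : α}

theorem sameCycle_apply_of_mul_sq_apply (hs : s * s = 1) (hfix : (f * s) a = a)
    (hsq : ∀ p, f.SameCycle a p → ((f * s) ^ 2) p = p) {p : α} (hp : f.SameCycle a p) :
    f.SameCycle a (s p) := by
  obtain ⟨i, rfl⟩ := hp.exists_nat_pow_eq
  induction i with
  | zero =>
    rw [← Perm.sameCycle_apply_right, pow_zero, Perm.one_apply, ← Perm.mul_apply, hfix]
  | succ i ih =>
    have hs_inv : s⁻¹ = s := inv_eq_of_mul_eq_one_left hs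
    have hq : f.SameCycle a ((f ^ i) a) := Perm.sameCycle_pow_right.mpr (.refl f a)
    have hstep := hsq _ hp
    rw [pow_succ' f, sq, Perm.mul_apply, Perm.mul_apply, Perm.mul_apply, Perm.mul_apply,
      f.injective.eq_iff, ← Perm.eq_inv_iff_eq, hs_inv] at hstep
    rw [pow_succ', ← Perm.sameCycle_apply_right, Perm.mul_apply, hstep]
    exact ih hq

theorem sameCycle_apply_of_mem_closure (hs : s * s = 1) (hfix : (f * s) a = a)
    (hsq : ∀ p, f.SameCycle a p → ((f * s) ^ 2) p = p) {g : Perm α}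
    (hg : g ∈ Subgroup.closure {f, s}) : f.SameCycle a (g a) := by
  let P : Set α := {p | f.SameCycle a p}
  have hle : Subgroup.closure {f, s} ≤ MulAction.stabilizer (Perm α) P := by
    rw [Subgroup.closure_le]
    rintro _ (rfl | rfl) <;>
      refine (MulAction.mem_stabilizer_set_iff_smul_set_subset (Set.toFinite P)).mpr ?_ <;>
      rintro _ ⟨p, hp, rfl⟩
    · exact Perm.sameCycle_apply_right.mpr hp
    · exact sameCycle_apply_of_mul_sq_apply hs hfix hsq hp
  exact (MulAction.mem_stabilizer_set.mp (hle hg) a).mpr (.refl f a)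

end Involutions

section Tables

set_option maxRecDepth 100000

/-- The entry at `p` of a table of 85 points packed in base 100, least significant entry first;
`decide` evaluates this much faster than an application of `x` or `y`. -/
def lookup (T : ℕ) (p : Fin 85) : Fin 85 :=
  Fin.ofNat 85 (T / 100 ^ (p : ℕ) % 100)

/-- The number whose digits in base 100, least significant first, are the entries of `l`. -/
def packTable (l : List ℕ) : ℕ :=
  l.foldr (fun a n => a + 100 * n) 0

/-- The packed table of values of `x`. -/
def xTable : ℕ :=
  packTable [49, 0, 82, 28, 23, 81, 42, 68, 62, 57, 84, 8, 53, 55, 31, 39, 2, 9, 5, 76, 70, 71,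
    73, 3, 37, 10, 15, 11, 19, 38, 21, 13, 29, 66, 59, 25, 72, 4, 61, 65, 16, 77, 46, 7, 41, 14,
    50, 45, 34, 26, 60, 67, 58, 40, 44, 79, 36, 83, 20, 27, 22, 75, 56, 33, 74, 24, 18, 54, 12,
    35, 43, 63, 69, 80, 52, 32, 1, 30, 17, 6, 47, 51, 64, 78, 48]

/-- The packed table of values of `y`. -/
def yTable : ℕ :=
  packTable [0, 1, 2, 70, 4, 29, 17, 68, 27, 74, 10, 11, 12, 13, 23, 39, 57, 6, 33, 52, 58, 21,
    35, 14, 31, 60, 65, 8, 28, 5, 71, 24, 81, 18, 56, 22, 51, 37, 53, 15, 63, 78, 84, 61, 48, 75,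
    50, 72, 44, 55, 46, 36, 19, 38, 67, 49, 34, 16, 20, 59, 25, 43, 62, 40, 82, 26, 66, 54, 7, 69,
    3, 30, 47, 80, 9, 45, 79, 83, 41, 76, 73, 32, 64, 77, 42]

/-- The packed table of Singer labels: with `γ` a root of `X⁸ + X⁴ + X³ + X² + 1`, a primitive
element of `𝔽₂₅₆`, the point with label `i` stands for the line `𝔽₄ γⁱ`, a point of `PG(3, 4)`. -/
def singerTable : ℕ :=
  packTable [0, 2, 36, 3, 7, 13, 20, 84, 52, 51, 19, 81, 75, 46, 39, 37, 74, 80, 66, 32, 31, 82,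
    27, 9, 35, 60, 64, 56, 55, 28, 1, 6, 53, 44, 22, 49, 54, 67, 69, 21, 83, 58, 38, 61, 59, 11,
    12, 16, 50, 77, 48, 23, 10, 8, 42, 25, 72, 62, 30, 17, 79, 15, 71, 78, 14, 5, 68, 57, 40, 24,
    18, 65, 4, 43, 34, 29, 73, 33, 41, 45, 63, 70, 76, 47, 26]

/-- The bit mask of the exponents `i < 85` for which `γⁱ` has trace zero in `𝔽₄`. -/
def traceZero : ℕ :=
  ([0, 7, 13, 14, 17, 19, 23, 26, 27, 28, 34, 38, 46, 49, 51, 52, 54, 56, 67, 68, 76].map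
    (2 ^ ·)).sum

/-- Orthogonality for the form `(u, v) ↦ Tr (u v¹⁶)`, which up to a scalar is alternating; its
group of similitudes acts on the 85 points as `PSp(4, 4)`, extended here by a field automorphism. -/
def perp (p q : Fin 85) : Bool :=
  traceZero.testBit ((lookup singerTable p + 16 * lookup singerTable q : ℕ) % 85)

theorem x_apply : ∀ p, x p = lookup xTable p := by decide +kernel

theorem y_apply : ∀ p, y p = lookup yTable p := by decide +kernel

theorem x_mem_relAut : x ∈ relAut perp := fun p q => by
  have h : ∀ p q, perp (lookup xTable p) (lookup xTable q) = perp p q := by decide +kernel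
  rw [x_apply, x_apply, h]

theorem y_mem_relAut : y ∈ relAut perp := fun p q => by
  have h : ∀ p q, perp (lookup yTable p) (lookup yTable q) = perp p q := by decide +kernel
  rw [y_apply, y_apply, h]

end Tables

section CycleTypes

theorem cycleType_x : x.cycleType = Multiset.replicate 5 15 + Multiset.replicate 2 5 := by
  rw [x, cycleType_permOfCycles (by decide +kernel) (by decide +kernel)]
  decide +kernel

theorem cycleType_y : y.cycleType = Multiset.replicate 35 2 := by
  rw [y, cycleType_permOfCycles (by decide +kernel) (by decide +kernel)]
  decide +kernel

/-- The nontrivial cycles of `(x * y)⁻¹`. -/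
def zCycles : List (List (Fin 85)) := [
  [0, 1, 79, 49], [2, 57, 74, 82], [3, 14, 75, 43], [4, 37, 31, 23], [5, 33, 40, 38],
  [6, 76, 52, 9], [7, 61, 53, 12], [10, 60, 46, 84], [13, 24, 26, 55], [16, 63, 30, 83],
  [17, 41, 48, 42], [19, 28, 70, 58], [27, 59, 56, 62], [32, 45, 72, 51], [34, 44, 67, 36],
  [35, 69, 47, 73], [8, 11], [15, 65], [18, 66], [21, 71], [22, 25], [29, 81], [77, 78]]

theorem z_eq_permOfCycles : (x * y)⁻¹ = permOfCycles zCycles := by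
  have h : ∀ p, permOfCycles zCycles (lookup xTable (lookup yTable p)) = p := by decide +kernel
  refine inv_eq_of_mul_eq_one_left (Perm.ext fun p => ?_)
  rw [Perm.mul_apply, Perm.mul_apply, y_apply, x_apply, h, Perm.one_apply]

theorem cycleType_z : (x * y)⁻¹.cycleType = Multiset.replicate 16 4 + Multiset.replicate 7 2 := by
  rw [z_eq_permOfCycles, cycleType_permOfCycles (by decide +kernel) (by decide +kernel)]
  decide +kernel

theorem orderOf_x : orderOf x = 15 := by
  rw [← Perm.lcm_cycleType, cycleType_x]; decide

theorem orderOf_y : orderOf y = 2 := by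
  rw [← Perm.lcm_cycleType, cycleType_y]; decide

theorem orderOf_z : orderOf (x * y)⁻¹ = 4 := by
  rw [← Perm.lcm_cycleType, cycleType_z]; decide

theorem x_pow_fifteen : x ^ 15 = 1 := orderOf_x ▸ pow_orderOf_eq_one x

theorem y_mul_self : y * y = 1 := by
  rw [← sq, ← orderOf_y, pow_orderOf_eq_one]

theorem permInd_add : permInd x + permInd y + permInd (x * y)⁻¹ = 2 * (85 - 1) := by
  rw [permInd_eq_of_cycleType_eq cycleType_x, permInd_eq_of_cycleType_eq cycleType_y,
    permInd_eq_of_cycleType_eq cycleType_z]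
  decide

end CycleTypes

attribute [local irreducible] x y

section Words

/-- The group `⟨x, y⟩`, isomorphic to `PSp(4, 4) : 2`. -/
abbrev G : Subgroup (Perm (Fin 85)) := Subgroup.closure {x, y}

/-- The group `⟨x, yxy⟩`, isomorphic to `PSp(4, 4)`. -/
abbrev S : Subgroup (Perm (Fin 85)) := Subgroup.closure {x, y * x * y}

theorem x_mem_G : x ∈ G := Subgroup.subset_closure (by simp)

theorem y_mem_G : y ∈ G := Subgroup.subset_closure (by simp)

theorem x_mem_S : x ∈ S := Subgroup.subset_closure (by simp)

theorem S_le_G : S ≤ G := by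
  refine (Subgroup.closure_le _).mpr ?_
  rintro _ (rfl | rfl)
  exacts [x_mem_G, mul_mem (mul_mem y_mem_G x_mem_G) y_mem_G]

theorem G_le_relAut : G ≤ relAut perp := by
  refine (Subgroup.closure_le _).mpr ?_
  rintro _ (rfl | rfl)
  exacts [x_mem_relAut, y_mem_relAut]

/-- The product of the elements `x ^ a * y` for `a` running through `l`. -/
def word (l : List ℕ) : Perm (Fin 85) :=
  (l.map fun a => x ^ a * y).prod

/-- The action of `word l`, computed with the tables. -/
def evalWord (l : List ℕ) (p : Fin 85) : Fin 85 :=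
  l.foldr (fun a q => (lookup xTable)^[a] (lookup yTable q)) p

theorem iterate_lookup_xTable (i : ℕ) (p : Fin 85) : (lookup xTable)^[i] p = (x ^ i) p := by
  have hx : lookup xTable = x := funext fun p => (x_apply p).symm
  rw [hx, Perm.iterate_eq_pow]

theorem word_apply (l : List ℕ) (p : Fin 85) : word l p = evalWord l p := by
  induction l with
  | nil => rfl
  | cons a l ih =>
    simpa only [word, evalWord, List.map_cons, List.prod_cons, List.foldr_cons, Perm.mul_apply,
      iterate_lookup_xTable, y_apply] using congrArg (fun q => (x ^ a) (y q)) ih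

theorem word_append (l m : List ℕ) : word (l ++ m) = word l * word m := by
  simp [word]

theorem word_mem_G (l : List ℕ) : word l ∈ G :=
  list_prod_mem (by simpa using fun a _ => mul_mem (pow_mem x_mem_G a) y_mem_G)

theorem word_mem_S : ∀ {l : List ℕ}, Even l.length → word l ∈ S
  | [], _ => one_mem S
  | [_], h => absurd h Nat.not_even_one
  | a :: b :: l, h => by
    have hl : Even l.length := by simpa [Nat.even_add_one] using h
    have hab : x ^ a * y * (x ^ b * y) = x ^ a * (y * x * y) ^ b := by
      have hconj : (y * x * y⁻¹) ^ b = y * x ^ b * y⁻¹ := conj_pow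
      rw [inv_eq_of_mul_eq_one_left y_mul_self] at hconj
      rw [hconj]
      group
    have hmem : x ^ a * (y * x * y) ^ b ∈ S :=
      mul_mem (pow_mem x_mem_S a) (pow_mem (Subgroup.subset_closure (by simp)) b)
    simpa [word, ← mul_assoc, ← hab] using mul_mem hmem (word_mem_S hl)

theorem eq_one_of_evalWord {l : List ℕ} (h : ∀ p, evalWord l p = p) : word l = 1 :=
  Perm.ext fun p => by rw [word_apply, h, Perm.one_apply]

theorem word_eq_of_evalWord {l m : List ℕ} (h : ∀ p, evalWord l p = evalWord m p) :
    word l = word m :=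
  Perm.ext fun p => by rw [word_apply, word_apply, h]

theorem conj_word_eq_of_evalWord {h l m : List ℕ}
    (heval : ∀ p, evalWord (h ++ l) p = evalWord (m ++ h) p) :
    word h * word l * (word h)⁻¹ = word m := by
  rw [mul_inv_eq_iff_eq_mul, ← word_append, ← word_append, word_eq_of_evalWord heval]

theorem word_pair_zero (a : ℕ) : word [a, 0] = x ^ a := by
  simp [word, mul_assoc, y_mul_self]

theorem x_inv_eq_pow : x⁻¹ = x ^ 14 :=
  inv_eq_of_mul_eq_one_left (by rw [← pow_succ, x_pow_fifteen])

theorem word_one : word [1] = x * y := by simp [word]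

theorem word_zero_one : word [0, 1] = y * x * y := by simp [word, mul_assoc]

end Words

section Order

set_option maxRecDepth 100000

/-- A Schreier step for the stabiliser chain of `G`: the colour class of `b` over `F` has `k`
points, and each is of the form `(word u ^ i * word v) b` with `v ∈ vs`, where `word u` and all
`word v` fix `F` pointwise. Fifteen powers suffice, being the largest order of a `word u` used. -/
def IsTransversal (F : List (Fin 85)) (b : Fin 85) (u : List ℕ) (vs : List (List ℕ)) (k : ℕ) :
    Prop :=
  b ∉ F ∧ (colourClass perp F b).card = k ∧ (∀ w ∈ u :: vs, ∀ f ∈ F, evalWord w f = f) ∧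
    ∀ q ∈ colourClass perp F b, ∃ v ∈ vs, q ∈ List.iterate (evalWord u) (evalWord v b) 15

instance (F : List (Fin 85)) (b : Fin 85) (u : List ℕ) (vs : List (List ℕ)) (k : ℕ) :
    Decidable (IsTransversal F b u vs k) :=
  inferInstanceAs (Decidable (_ ∧ _ ∧ _ ∧ _))

/-- Words `v` such that the points `word v 20` represent the five 15-cycles of `x`, each paired
with a word for the inverse of `word v`. -/
def longCycleWords : List (List ℕ × List ℕ) :=
  [([], []), ([0, 2], [0, 13]), ([0, 8], [0, 7]), ([0, 1, 2, 0], [13, 14]),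
    ([0, 1, 2, 3], [0, 12, 13, 14])]

theorem isTransversal_points : IsTransversal [] 20 [1, 0]
    (longCycleWords.map Prod.fst ++ [[0, 9], [0, 3]]) 85 := by
  decide +kernel

theorem isTransversal_not_perp : IsTransversal [20] 12 [0, 8, 14, 3]
    [[], [0, 3, 7, 5], [4, 11], [0, 1, 2, 2], [12, 5], [1, 1]] 64 := by
  decide +kernel

theorem isTransversal_perp : IsTransversal [20] 18 [0, 8, 14, 3] [[], [12, 5]] 20 := by
  decide +kernel

namespace IsTransversal

variable {F : List (Fin 85)} {b : Fin 85} {u : List ℕ} {vs : List (List ℕ)} {k : ℕ}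

theorem exists_pow_word_apply_eq (h : IsTransversal F b u vs k) {q : Fin 85}
    (hq : q ∈ colourClass perp F b) : ∃ v ∈ vs, ∃ i : ℕ, (word u ^ i * word v) b = q := by
  obtain ⟨-, -, -, hcover⟩ := h
  obtain ⟨v, hv, hmem⟩ := hcover q hq
  obtain ⟨i, -, rfl⟩ := List.mem_iterate.mp hmem
  have hu : ⇑(word u) = evalWord u := funext (word_apply u)
  exact ⟨v, hv, i, by rw [Perm.mul_apply, word_apply v, ← Perm.iterate_eq_pow, hu]⟩

theorem exists_mem_fixer (h : IsTransversal F b u vs k) {H : Subgroup (Perm (Fin 85))}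
    (hH : ∀ w ∈ u :: vs, word w ∈ H) {q : Fin 85} (hq : q ∈ colourClass perp F b) :
    ∃ g ∈ fixer H F, g b = q := by
  obtain ⟨v, hv, i, rfl⟩ := h.exists_pow_word_apply_eq hq
  obtain ⟨-, -, hfix, -⟩ := h
  have hword (w : List ℕ) (hw : w ∈ u :: vs) : word w ∈ fixer H F :=
    mem_fixer.mpr ⟨hH w hw, fun f hf => (word_apply w f).trans (hfix w hw f hf)⟩
  exact ⟨_, mul_mem (pow_mem (hword u (by simp)) i) (hword v (by simp [hv])), rfl⟩

theorem card_fixer (h : IsTransversal F b u vs k) :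
    Nat.card (fixer G F) = k * Nat.card (fixer G (b :: F)) := by
  have hcard := card_fixer_eq_card_colourClass_mul G_le_relAut h.1
    fun q => h.exists_mem_fixer fun w _ => word_mem_G w
  rwa [h.2.1] at hcard

end IsTransversal

theorem eq_one_of_mem_fixer_base {g : Perm (Fin 85)}
    (hg : g ∈ fixer (relAut perp) [22, 29, 21, 54, 18, 12, 20]) : g = 1 :=
  eq_one_of_iterate_hull_eq_finRange (k := 4) (by decide +kernel) hg

theorem card_G : Nat.card G = 1958400 := by
  have hnil : fixer G [] = G := by ext g; simp [mem_fixer]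
  have hbase : fixer G [22, 29, 21, 54, 18, 12, 20] = ⊥ :=
    (Subgroup.eq_bot_iff_forall _).mpr fun g hg => eq_one_of_mem_fixer_base
      (mem_fixer.mpr ⟨G_le_relAut (mem_fixer.mp hg).1, (mem_fixer.mp hg).2⟩)
  have h₅ : IsTransversal [12, 20] 18 [0, 8, 14, 3] [[]] 5 := by decide +kernel
  have h₄ : IsTransversal [18, 12, 20] 54 [6, 5, 8, 8, 5] [[]] 4 := by decide +kernel
  have h₃ : IsTransversal [54, 18, 12, 20] 21 [10, 6] [[]] 3 := by decide +kernel
  have h₂ : IsTransversal [21, 54, 18, 12, 20] 29 [0, 7, 13, 2, 8] [[]] 2 := by decide +kernel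
  have h₃' : IsTransversal [29, 21, 54, 18, 12, 20] 22
      (List.replicate 5 [0, 8, 14, 3]).flatten [[]] 3 := by decide +kernel
  rw [← hnil, isTransversal_points.card_fixer, isTransversal_not_perp.card_fixer, h₅.card_fixer,
    h₄.card_fixer, h₃.card_fixer, h₂.card_fixer, h₃'.card_fixer, hbase, Subgroup.card_bot]

theorem G_ne_top : G ≠ ⊤ := fun h => by
  have hcard := card_G
  rw [h, Subgroup.card_top, Nat.card_perm, Nat.card_fin] at hcard
  exact absurd hcard (by decide +kernel)

theorem G_ne_alternatingGroup : G ≠ alternatingGroup (Fin 85) := fun h => by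
  have hcard := two_mul_nat_card_alternatingGroup (α := Fin 85)
  rw [← h, card_G, Nat.card_perm, Nat.card_fin] at hcard
  exact absurd hcard (by decide +kernel)

end Order

section AlmostSimple

set_option maxRecDepth 100000

variable {H : Subgroup (Perm (Fin 85))}

theorem isPretransitive_of_S_le (hH : S ≤ H) : MulAction.IsPretransitive H (Fin 85) := by
  refine (MulAction.isPretransitive_iff_base (20 : Fin 85)).mpr fun q => ?_
  obtain ⟨g, hg, rfl⟩ := isTransversal_points.exists_mem_fixer
    (fun w hw => hH (word_mem_S (by revert w; decide))) (Finset.mem_filter.mpr (by simp) : q ∈ _)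
  exact ⟨⟨g, (mem_fixer.mp hg).1⟩, rfl⟩

theorem isPreprimitive_of_S_le (hH : S ≤ H) : MulAction.IsPreprimitive H (Fin 85) := by
  have := isPretransitive_of_S_le hH
  have hreach {b : Fin 85} {u : List ℕ} {vs : List (List ℕ)} {k : ℕ}
      (h : IsTransversal [20] b u vs k) (heven : ∀ w ∈ u :: vs, Even w.length) :
      ∀ q ∈ colourClass perp [20] b, ∃ g : H, g • (20 : Fin 85) = 20 ∧ g • b = q := fun q hq => by
    obtain ⟨g, hg, rfl⟩ := h.exists_mem_fixer (fun w hw => hH (word_mem_S (heven w hw))) hq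
    obtain ⟨hgH, hgfix⟩ := mem_fixer.mp hg
    exact ⟨⟨g, hgH⟩, hgfix 20 (by simp), rfl⟩
  have hcompl : ((insert 20 (colourClass perp [20] 18) : Finset (Fin 85)) : Set (Fin 85))ᶜ =
      colourClass perp [20] 12 := by
    rw [← Finset.coe_compl]
    exact congrArg _ (by decide +kernel)
  refine isPreprimitive_of_rank_three (o := (20 : Fin 85)) (b := 18) (c := 12)
    (Δ := colourClass perp [20] 18) (hreach isTransversal_perp (by decide)) ?_ ?_ ?_
  · rw [← Finset.coe_insert, hcompl]
    exact hreach isTransversal_not_perp (by decide)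
  · rw [← Finset.coe_insert, Set.ncard_coe_finset, Nat.card_fin]
    decide +kernel
  · rw [← Finset.coe_compl, Set.ncard_coe_finset, Nat.card_fin]
    decide +kernel

/-- Words for the four elations with centre `20`, the first one nontrivial being `(xy)²`. -/
def elationWords : List (List ℕ) :=
  [[], [1, 1], [0, 5, 10, 1, 6, 10], [0, 5, 10, 1, 6, 10, 1, 1]]

theorem word_elation_apply {w : List ℕ} (hw : w ∈ elationWords) {p : Fin 85} (hp : perp 20 p) :
    word w p = p := by
  have h : ∀ w ∈ elationWords, ∀ p, perp 20 p → evalWord w p = p := by decide +kernel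
  rw [word_apply, h w hw p hp]

theorem word_elation_sq {w : List ℕ} (hw : w ∈ elationWords) : word w ^ 2 = 1 := by
  have h : ∀ w ∈ elationWords, ∀ p, evalWord (w ++ w) p = p := by decide +kernel
  rw [sq, ← word_append, eq_one_of_evalWord (h w hw)]

theorem exists_elationWord_eq {g : Perm (Fin 85)} (hg : g ∈ relAut perp)
    (hfix : ∀ p, perp 20 p → g p = p) : ∃ w ∈ elationWords, word w = g := by
  have hcover : ∀ q ∈ colourClass perp ((List.finRange 85).filter (perp 20)) 12,
      ∃ w ∈ elationWords, evalWord w 12 = q := by decide +kernel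
  have hgF : g ∈ fixer (relAut perp) ((List.finRange 85).filter (perp 20)) :=
    mem_fixer.mpr ⟨hg, fun p hp => hfix p (List.mem_filter.mp hp).2⟩
  obtain ⟨w, hw, hw12⟩ := hcover _ (apply_mem_colourClass (by decide +kernel) hgF)
  have hbase : ∀ p ∈ [22, 29, 21, 54, 18, 12, 20], p = 12 ∨ perp 20 p := by decide +kernel
  refine ⟨w, hw, inv_mul_eq_one.mp (eq_one_of_mem_fixer_base (mem_fixer.mpr ⟨?_, fun p hp => ?_⟩))⟩
  · exact mul_mem (inv_mem (G_le_relAut (word_mem_G w))) hg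
  · rw [Perm.mul_apply, Perm.inv_eq_iff_eq]
    rcases hbase p hp with rfl | hperp
    · rw [word_apply, hw12]
    · rw [hfix p hperp, word_elation_apply hw hperp]

theorem exists_conj_elationWord_eq {g h : Perm (Fin 85)} (hg : g ∈ relAut perp)
    (hh : h ∈ relAut perp) (hfix : ∀ p, perp (h 20) p → g p = p) :
    ∃ w ∈ elationWords, g = h * word w * h⁻¹ := by
  obtain ⟨w, hw, hword⟩ := exists_elationWord_eq (g := h⁻¹ * g * h)
    (mul_mem (mul_mem (inv_mem hh) hg) hh) fun p hp => by
      rw [Perm.mul_apply, Perm.mul_apply, Perm.inv_eq_iff_eq]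
      exact hfix _ ((hh 20 p).trans hp)
  exact ⟨w, hw, by rw [hword]; group⟩

theorem sq_eq_one_of_fixes_perp {g : Perm (Fin 85)} (hg : g ∈ relAut perp) {o : Fin 85}
    (hfix : ∀ p, perp o p → g p = p) : g ^ 2 = 1 := by
  have := isPretransitive_of_S_le le_rfl
  obtain ⟨s, rfl⟩ := MulAction.exists_smul_eq S (20 : Fin 85) o
  obtain ⟨w, hw, rfl⟩ := exists_conj_elationWord_eq hg (G_le_relAut (S_le_G s.2)) hfix
  rw [conj_pow, word_elation_sq hw, mul_one, mul_inv_cancel]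

theorem exists_mem_S_conj_x_eq_inv : ∃ h ∈ S, h * x * h⁻¹ = x⁻¹ := by
  have hconj : word [0, 2, 2, 5, 7, 8] * word [1, 0] * (word [0, 2, 2, 5, 7, 8])⁻¹ =
      word [14, 0] := conj_word_eq_of_evalWord (by decide +kernel)
  rw [word_pair_zero, word_pair_zero, pow_one, ← x_inv_eq_pow] at hconj
  exact ⟨_, word_mem_S (by decide), hconj⟩

theorem commutator_S : commutator S = ⊤ := by
  have hy_inv : y⁻¹ = y := inv_eq_of_mul_eq_one_left y_mul_self
  have hodd : Odd (orderOf x) := by rw [orderOf_x]; decide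
  obtain ⟨h, hh, hconj⟩ := exists_mem_S_conj_x_eq_inv
  refine commutator_closure_eq_top ?_ ?_
  · rintro _ (rfl | rfl)
    · exact hodd
    · have horder := orderOf_injective (MulAut.conj y).toMonoidHom (MulAut.conj y).injective x
      rw [← horder] at hodd
      simpa [hy_inv] using hodd
  · rintro _ (rfl | rfl)
    · exact ⟨h, hh, hconj⟩
    · refine ⟨y * h * y⁻¹, (Subgroup.mem_normalizer_iff.mp
        (closure_pair_le_normalizer y_mul_self y_mem_G) h).mp hh, ?_⟩
      calc y * h * y⁻¹ * (y * x * y) * (y * h * y⁻¹)⁻¹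
          = y * h * x * (y * y) * h⁻¹ * y⁻¹ := by group
        _ = y * (h * x * h⁻¹) * y⁻¹ := by rw [y_mul_self]; group
        _ = (y * x * y)⁻¹ := by rw [hconj]; simp [hy_inv, mul_assoc]

theorem isSimpleGroup_S : IsSimpleGroup S := by
  have := isPreprimitive_of_S_le le_rfl
  have hx : x ≠ 1 := fun h => by simpa [h] using orderOf_x
  refine isSimpleGroup_closure_pair hx (S_le_G.trans G_le_relAut) commutator_S
    (fun g hg o => sq_eq_one_of_fixes_perp (G_le_relAut (S_le_G hg))) (o := 20) fun p hp => ?_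
  have hxyxy : x * (y * x * y) = word [1, 1] := by simp [word, mul_assoc]
  rw [hxyxy, word_elation_apply (by decide) hp]

theorem x_mul_ne : x * (y * x * y) ≠ y * x * y * x := by
  have hne : ∃ p, evalWord ([1, 0] ++ [0, 1]) p ≠ evalWord ([0, 1] ++ [1, 0]) p := by
    decide +kernel
  obtain ⟨p, hp⟩ := hne
  rw [← word_zero_one, ← pow_one x, ← word_pair_zero, ← word_append, ← word_append]
  exact fun h => hp (by rw [← word_apply, ← word_apply, h])

theorem isPretransitive_S_subgroupOf_G :
    MulAction.IsPretransitive (S.subgroupOf G) (Fin 85) := by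
  have := isPretransitive_of_S_le le_rfl
  refine ⟨fun p q => ?_⟩
  obtain ⟨s, hs⟩ := MulAction.exists_smul_eq S p q
  exact ⟨⟨⟨s, S_le_G s.2⟩, s.2⟩, hs⟩

theorem centralizer_S_subgroupOf_G :
    Subgroup.centralizer ((S.subgroupOf G : Subgroup G) : Set G) = ⊥ := by
  have := isPretransitive_S_subgroupOf_G
  have hfix : ∀ p, evalWord [0, 8, 14, 3] p = p → evalWord [12, 5] p = p → p = 20 := by
    decide +kernel
  refine centralizer_eq_bot_of_isPretransitive (α := Fin 85) (o := 20) fun p hp => ?_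
  have hword (w : List ℕ) (hw : Even w.length) (hw20 : evalWord w 20 = 20) : evalWord w p = p := by
    have happly := hp ⟨word w, word_mem_G w⟩ (word_mem_S hw) ((word_apply w 20).trans hw20)
    exact (word_apply w p).symm.trans happly
  exact hfix p (hword _ (by decide) (by decide +kernel)) (hword _ (by decide) (by decide +kernel))

theorem exists_normal_isSimpleGroup_centralizer_eq_bot :
    ∃ T : Subgroup G, T.Normal ∧ IsSimpleGroup T ∧ (∃ a b : T, a * b ≠ b * a) ∧
      Subgroup.centralizer (T : Set G) = ⊥ := by
  have hequiv : S.subgroupOf G ≃* S := Subgroup.subgroupOfEquivOfLe S_le_G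
  have := isSimpleGroup_S
  refine ⟨S.subgroupOf G, Subgroup.normal_subgroupOf_of_le_normalizer
    (closure_pair_le_normalizer y_mul_self), hequiv.isSimpleGroup, ?_, centralizer_S_subgroupOf_G⟩
  refine ⟨hequiv.symm ⟨x, x_mem_S⟩, hequiv.symm ⟨y * x * y, Subgroup.subset_closure (by simp)⟩, ?_⟩
  rw [← map_mul, ← map_mul]
  exact fun h => x_mul_ne (congrArg Subtype.val (hequiv.symm.injective h))

end AlmostSimple

section Rational

set_option maxRecDepth 100000

theorem neg_one_mem_conjExponents_x : -1 ∈ conjExponents G x := by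
  obtain ⟨h, hh, hconj⟩ := exists_mem_S_conj_x_eq_inv
  exact ⟨h, S_le_G hh, hconj.trans (zpow_neg_one x).symm⟩

theorem two_mem_conjExponents_x : 2 ∈ conjExponents G x := by
  have hconj : word [0, 2, 8, 14, 13, 7, 4, 2, 1] * word [1, 0] *
      (word [0, 2, 8, 14, 13, 7, 4, 2, 1])⁻¹ = word [2, 0] :=
    conj_word_eq_of_evalWord (by decide +kernel)
  rw [word_pair_zero, word_pair_zero, pow_one] at hconj
  exact ⟨_, word_mem_G _, hconj⟩

theorem neg_one_mem_conjExponents_z : -1 ∈ conjExponents G (x * y)⁻¹ := by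
  have hinv : word [0, 14, 0] = (x * y)⁻¹ := by
    rw [mul_inv_rev, x_inv_eq_pow, inv_eq_of_mul_eq_one_left y_mul_self]
    simp [word, mul_assoc, y_mul_self]
  have hconj : word [3, 5, 13, 6, 10] * word [0, 14, 0] * (word [3, 5, 13, 6, 10])⁻¹ =
      word [1] := conj_word_eq_of_evalWord (by decide +kernel)
  rw [hinv, word_one] at hconj
  exact ⟨_, word_mem_G _, by rw [hconj, zpow_neg_one, inv_inv]⟩

theorem mem_conjExponents_x {k : ℤ} (hk : Int.gcd k (orderOf x) = 1) : k ∈ conjExponents G x := by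
  -- The unit group of `ℤ / 15` is generated by `-1` and `2`.
  have hunits : ∀ r : ℕ, r < 15 → r.Coprime 15 →
      ∃ i < 4, (r : ℤ) % 15 = 2 ^ i % 15 ∨ (r : ℤ) % 15 = -1 * 2 ^ i % 15 := by decide
  refine mem_conjExponents_of_forall_lt (fun r hr hcoprime => ?_) hk
  rw [orderOf_x] at hr hcoprime
  obtain ⟨i, -, hi | hi⟩ := hunits r hr hcoprime
  · exact (mem_conjExponents_congr (orderOf_x ▸ hi)).mpr (pow_mem two_mem_conjExponents_x i)
  · exact (mem_conjExponents_congr (orderOf_x ▸ hi)).mpr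
      (mul_mem neg_one_mem_conjExponents_x (pow_mem two_mem_conjExponents_x i))

theorem mem_conjExponents_y {k : ℤ} (hk : Int.gcd k (orderOf y) = 1) : k ∈ conjExponents G y := by
  refine mem_conjExponents_of_forall_lt (fun r hr hcoprime => ?_) hk
  rw [orderOf_y] at hr hcoprime
  obtain rfl : r = 1 := by interval_cases r <;> simp_all
  exact one_mem _

theorem mem_conjExponents_z {k : ℤ} (hk : Int.gcd k (orderOf (x * y)⁻¹) = 1) :
    k ∈ conjExponents G (x * y)⁻¹ := by
  refine mem_conjExponents_of_forall_lt (fun r hr hcoprime => ?_) hk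
  rw [orderOf_z] at hr hcoprime
  obtain rfl | rfl : r = 1 ∨ r = 3 := by revert r; decide
  · exact one_mem _
  · exact (mem_conjExponents_congr (orderOf_z ▸ (by decide : (3 : ℤ) ≡ -1 [ZMOD 4]))).mpr
      neg_one_mem_conjExponents_z

end Rational

section Rigid

set_option maxRecDepth 100000

variable {s k : Perm (Fin 85)}

theorem eq_one_of_commute_x {c : Perm (Fin 85)} (hc : c ∈ relAut perp) (hcx : Commute c x)
    (hc20 : c 20 = 20) : c = 1 := by
  have hbase : ∀ b ∈ [22, 29, 21, 54, 18, 12, 20],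
      b ∈ (hull perp)^[2] (List.iterate (lookup xTable) 20 15) := by decide +kernel
  have hcycle : c ∈ fixer (relAut perp) (List.iterate (lookup xTable) 20 15) := by
    refine mem_fixer.mpr ⟨hc, fun p hp => ?_⟩
    obtain ⟨i, -, rfl⟩ := List.mem_iterate.mp hp
    rw [iterate_lookup_xTable, ← Perm.mul_apply, (hcx.pow_right i).eq, Perm.mul_apply, hc20]
  exact eq_one_of_mem_fixer_base (mem_fixer.mpr ⟨hc, fun b hb =>
    (mem_fixer.mp (mem_fixer_iterate_hull hcycle 2)).2 b (hbase b hb)⟩)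

theorem x_mul_y_apply_twenty : (x * y) 20 = 20 := by
  rw [← word_one, word_apply]
  decide +kernel

theorem x_mul_apply_of_conj (hconj : k * (x * y) * k⁻¹ = x * s) : (x * s) (k 20) = k 20 := by
  rw [← hconj, ← Perm.mul_apply, inv_mul_cancel_right, Perm.mul_apply, x_mul_y_apply_twenty]

theorem x_mul_sq_apply_of_conj (hk : k ∈ relAut perp) (hconj : k * (x * y) * k⁻¹ = x * s)
    {p : Fin 85} (hp : perp (k 20) p) : ((x * s) ^ 2) p = p := by
  have hperp : perp 20 (k⁻¹ p) := by simpa [hp] using (hk 20 (k⁻¹ p)).symm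
  have hword : (x * y) ^ 2 = word [1, 1] := by simp [word, sq]
  rw [← hconj, conj_pow, hword, Perm.mul_apply, Perm.mul_apply,
    word_elation_apply (by decide) hperp, ← Perm.mul_apply, mul_inv_cancel, Perm.one_apply]

theorem perp_of_sameCycle_x {a p : Fin 85} (ha : (x ^ 5) a = a) (hp : x.SameCycle a p) :
    perp a p := by
  have hperp : ∀ p, (lookup xTable)^[5] p = p → ∀ i < 5, perp p ((lookup xTable)^[i] p) := by
    decide +kernel
  rw [← iterate_lookup_xTable] at ha
  obtain ⟨i, rfl⟩ := hp.exists_nat_pow_eq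
  rw [← iterate_lookup_xTable, ← Function.IsPeriodicPt.iterate_mod_apply (n := 5) ha]
  exact hperp a ha _ (Nat.mod_lt i (by norm_num))

theorem x_pow_five_apply_ne (hk : k ∈ relAut perp) (hs : s * s = 1)
    (hconj : k * (x * y) * k⁻¹ = x * s) (hgen : Subgroup.closure {x, s} = G) :
    (x ^ 5) (k 20) ≠ k 20 := fun hfive => by
  have := isPretransitive_of_S_le S_le_G
  obtain ⟨g, hg⟩ := MulAction.exists_smul_eq G (k 20) (20 : Fin 85)
  obtain ⟨i, hi⟩ := sameCycle_apply_of_mem_closure hs (x_mul_apply_of_conj hconj)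
    (fun p hp => x_mul_sq_apply_of_conj hk hconj (perp_of_sameCycle_x hfive hp))
    (hgen.ge g.2)
  replace hi : (x ^ i) (k 20) = 20 := hi.trans hg
  have htwenty : (x ^ 5) 20 = 20 := by
    nth_rw 1 [← hi]
    rw [← Perm.mul_apply, ((Commute.refl x).pow_left 5).zpow_right i, Perm.mul_apply, hfive, hi]
  rw [← iterate_lookup_xTable] at htwenty
  exact absurd htwenty (by decide +kernel)

theorem word_longCycle_inv {v : List ℕ × List ℕ} (hv : v ∈ longCycleWords) :
    (word v.1)⁻¹ = word v.2 := by
  have h : ∀ v ∈ longCycleWords, ∀ p, evalWord (v.1 ++ v.2) p = p := by decide +kernel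
  exact inv_eq_of_mul_eq_one_right (by rw [← word_append, eq_one_of_evalWord (h v hv)])

theorem eq_nil_or_eq_of_isConj_x {v : List ℕ × List ℕ} (hv : v ∈ longCycleWords) {w : List ℕ}
    (hw : w ∈ elationWords) (hconj : IsConj x (x⁻¹ * (word v.1 * word w * (word v.1)⁻¹))) :
    w = [] ∨ v.1 = [] ∧ w = [1, 1] := by
  have hcheck : ∀ v ∈ longCycleWords, ∀ w ∈ elationWords, w = [] ∨ v.1 = [] ∧ w = [1, 1] ∨
      (evalWord ([14, 0] ++ v.1 ++ w ++ v.2))^[15] 0 ≠ 0 ∨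
      (∃ p, evalWord ([14, 0] ++ v.1 ++ w ++ v.2) p = p) ∨
      ∀ p, (evalWord ([14, 0] ++ v.1 ++ w ++ v.2))^[5] p = p := by decide +kernel
  have hxfix : ∀ p, lookup xTable p ≠ p := by decide +kernel
  have hword : x⁻¹ * (word v.1 * word w * (word v.1)⁻¹) = word ([14, 0] ++ v.1 ++ w ++ v.2) := by
    simp only [word_append, word_pair_zero, x_inv_eq_pow, word_longCycle_inv hv, mul_assoc]
  have heval := funext (word_apply ([14, 0] ++ v.1 ++ w ++ v.2))
  obtain ⟨c, hc⟩ := isConj_iff.mp hconj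
  rw [hword] at hc
  rcases hcheck v hv w hw with h | h | h | ⟨p, hp⟩ | h
  · exact .inl h
  · exact .inr h
  · refine absurd ?_ h
    rw [← heval, Perm.iterate_eq_pow, ← hc, conj_pow, x_pow_fifteen]
    simp
  · refine absurd ?_ (hxfix (c⁻¹ p))
    rw [← word_apply, ← hc, Perm.mul_apply, Perm.mul_apply, ← Perm.eq_inv_iff_eq] at hp
    rw [← x_apply, hp]
  · have hfive : (c * x * c⁻¹) ^ 5 = 1 := Perm.ext fun p => by
      rw [hc, ← Perm.iterate_eq_pow, heval, h, Perm.one_apply]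
    rw [conj_pow, conj_eq_one_iff] at hfive
    exact absurd (orderOf_dvd_of_pow_eq_one hfive) (by rw [orderOf_x]; decide)

theorem x_mul_sq_eq (hk : k ∈ G) (hsG : s ∈ G) (hs : s * s = 1)
    (hconj : k * (x * y) * k⁻¹ = x * s) {v : List ℕ × List ℕ} (hv : v ∈ longCycleWords)
    (hkv : k 20 = word v.1 20) : v.1 = [] ∧ (x * s) ^ 2 = (x * y) ^ 2 := by
  obtain ⟨w, hw, hsq⟩ := exists_conj_elationWord_eq
    (G_le_relAut (pow_mem (mul_mem x_mem_G hsG) 2)) (G_le_relAut (word_mem_G v.1))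
    fun p hp => x_mul_sq_apply_of_conj (G_le_relAut hk) hconj (hkv ▸ hp)
  have hconj_x : IsConj x (x⁻¹ * (word v.1 * word w * (word v.1)⁻¹)) := by
    refine isConj_iff.mpr ⟨s, ?_⟩
    rw [← hsq, inv_eq_of_mul_eq_one_left hs, sq]
    group
  rcases eq_nil_or_eq_of_isConj_x hv hw hconj_x with rfl | ⟨hv_nil, rfl⟩
  · have hone : (x * y) ^ 2 = 1 := by
      rw [← conj_eq_one_iff (a := k), ← conj_pow, hconj, hsq]
      simp [word]
    have hdvd := orderOf_dvd_of_pow_eq_one hone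
    rw [← orderOf_inv, orderOf_z] at hdvd
    exact absurd hdvd (by decide)
  · refine ⟨hv_nil, hsq.trans ?_⟩
    simp [hv_nil, word, sq]

theorem eq_y_of_apply_twenty (hk : k ∈ G) (hsG : s ∈ G) (hs : s * s = 1)
    (hconj : k * (x * y) * k⁻¹ = x * s) {v : List ℕ × List ℕ} (hv : v ∈ longCycleWords)
    (hkv : k 20 = word v.1 20) : s = y := by
  obtain ⟨hv_nil, hsq⟩ := x_mul_sq_eq hk hsG hs hconj hv hkv
  have hcomm : Commute (y * s) x := by
    have hsx : s * x * s = y * x * y := by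
      simpa only [sq, mul_assoc, mul_right_inj] using hsq
    calc y * s * x = y * (s * x * s) * s⁻¹ := by group
      _ = y * y * x * y * s⁻¹ := by rw [hsx]; group
      _ = x * (y * s) := by rw [y_mul_self, inv_eq_of_mul_eq_one_left hs]; group
  have hfix : s 20 = y 20 := by
    have hk20 : k 20 = 20 := by simp [hkv, hv_nil, word]
    have hxs := x_mul_apply_of_conj hconj
    have hxy := x_mul_y_apply_twenty
    rw [Perm.mul_apply] at hxs hxy
    exact x.injective (by rw [← hk20, hxs, hk20, hxy])
  have hone : y * s = 1 := eq_one_of_commute_x (G_le_relAut (mul_mem y_mem_G hsG)) hcomm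
    (by rw [Perm.mul_apply, hfix, ← Perm.mul_apply, y_mul_self, Perm.one_apply])
  rw [eq_inv_of_mul_eq_one_right hone, inv_eq_of_mul_eq_one_left y_mul_self]

theorem exists_x_pow_inv_apply_eq {a : Fin 85} (ha : (x ^ 5) a ≠ a) :
    ∃ i : ℕ, ∃ v ∈ longCycleWords, (x ^ i)⁻¹ a = word v.1 20 := by
  obtain ⟨v, hv, i, hi⟩ := isTransversal_points.exists_pow_word_apply_eq
    (Finset.mem_filter.mpr (by simp) : a ∈ _)
  rw [word_pair_zero, pow_one, Perm.mul_apply] at hi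
  rcases List.mem_append.mp hv with hlong | hshort
  · obtain ⟨v, hv_long, rfl⟩ := List.mem_map.mp hlong
    exact ⟨i, v, hv_long, Perm.inv_eq_iff_eq.mpr hi.symm⟩
  · have hfive : ∀ v ∈ [[0, 9], [0, 3]], (lookup xTable)^[5] (evalWord v 20) = evalWord v 20 := by
      decide +kernel
    refine absurd ?_ ha
    rw [← hi, ← Perm.mul_apply, ← pow_add, add_comm, pow_add, Perm.mul_apply,
      ← iterate_lookup_xTable 5, word_apply, hfive v hshort]

theorem exists_conj_eq_of_closure_eq (hgen : Subgroup.closure {x, s} = G)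
    (hy : ∃ g ∈ G, g * y * g⁻¹ = s) (hxy : ∃ g ∈ G, g * (x * y) * g⁻¹ = x * s) :
    ∃ g ∈ G, g * x * g⁻¹ = x ∧ g * y * g⁻¹ = s := by
  have hs : s * s = 1 := by
    obtain ⟨g, -, rfl⟩ := hy
    rw [← sq, conj_pow, sq, y_mul_self, mul_one, mul_inv_cancel]
  have hsG : s ∈ G := hgen ▸ Subgroup.subset_closure (by simp)
  obtain ⟨k, hk, hconj⟩ := hxy
  obtain ⟨i, v, hv, hkv⟩ :=
    exists_x_pow_inv_apply_eq (x_pow_five_apply_ne (G_le_relAut hk) hs hconj hgen)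
  have hx : x ^ i ∈ G := pow_mem x_mem_G i
  have hs_eq : (x ^ i)⁻¹ * s * x ^ i = y := by
    refine eq_y_of_apply_twenty (k := (x ^ i)⁻¹ * k) (mul_mem (inv_mem hx) hk)
      (mul_mem (mul_mem (inv_mem hx) hsG) hx) ?_ ?_ hv hkv
    · calc (x ^ i)⁻¹ * s * x ^ i * ((x ^ i)⁻¹ * s * x ^ i) = (x ^ i)⁻¹ * (s * s) * x ^ i := by group
        _ = 1 := by rw [hs]; group
    · calc (x ^ i)⁻¹ * k * (x * y) * ((x ^ i)⁻¹ * k)⁻¹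
          = (x ^ i)⁻¹ * (k * (x * y) * k⁻¹) * x ^ i := by group
        _ = x * ((x ^ i)⁻¹ * s * x ^ i) := by rw [hconj]; group
  exact ⟨x ^ i, hx, by group, by rw [← hs_eq]; group⟩

end Rigid

theorem isNice_x_y : IsNice x y (x * y)⁻¹ := by
  have := isPreprimitive_of_S_le S_le_G
  refine ⟨mul_inv_cancel (x * y), ⟨G_ne_alternatingGroup, G_ne_top⟩, isPreprimitive_of_mulAction,
    exists_normal_isSimpleGroup_centralizer_eq_bot, permInd_add, fun a b c => ?rigid, ?rational⟩
  case rigid => exact exists_conj_triple_of_exists_conj_pair fun _ => exists_conj_eq_of_closure_eq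
  case rational =>
    rintro _ (rfl | rfl | rfl) k hk
    exacts [mem_conjExponents_x hk, mem_conjExponents_y hk, mem_conjExponents_z hk]

end NiceTriple

theorem nice_triple_deg85_stmt8 :
    IsNice x y (x * y)⁻¹ ∧
    x.cycleType = Multiset.replicate 5 15 + Multiset.replicate 2 5 ∧
    y.cycleType = Multiset.replicate 35 2 ∧
    ((x * y)⁻¹).cycleType = Multiset.replicate 16 4 + Multiset.replicate 7 2 ∧
    Nat.card ↥(Subgroup.closure {x, y} : Subgroup (Equiv.Perm (Fin 85))) = 1958400 :=
  ⟨NiceTriple.isNice_x_y, NiceTriple.cycleType_x, NiceTriple.cycleType_y, NiceTriple.cycleType_z,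
    NiceTriple.card_G⟩
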